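/- There exists an absolute constant c > 0 such that for every finite set A ⊆ ℝ \ {0} with |A| ≥ 2, both |AA + AA| ≥ c·|A|·|A:A|^(1/2) and |AA − AA| ≥ c·|A|·|A:A|^(1/2) hold. -/

import Mathlib

open Finset
open scoped Pointwise

/-- A set is at most its image plus the number of collisions. -/
theorem card_le_image_add_coll {X Y : Type*} [DecidableEq X] [DecidableEq Y] [Nonempty X]
    (s : Finset X) (f : X → Y) :
    s.card ≤ (s.image f).card +
      ((s ×ˢ s).filter (fun p => p.1 ≠ p.2 ∧ f p.1 = f p.2)).card := by
  classical
  set rep : Y → X := Function.invFunOn f (s : Set X) with hrep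
  have h1 : ∀ p ∈ s, rep (f p) ∈ s ∧ f (rep (f p)) = f p := by
    intro p hp
    have hex : ∃ a ∈ (s : Set X), f a = f p := ⟨p, hp, rfl⟩
    exact ⟨Function.invFunOn_mem hex, Function.invFunOn_eq hex⟩
  rw [← Finset.card_filter_add_card_filter_not (s := s) (fun p => rep (f p) = p)]
  apply Nat.add_le_add
  · apply Finset.card_le_card_of_injOn f
    · intro p hp
      simp only [coe_filter, Set.mem_ofPred_eq] at hp
      simp only [coe_image]
      exact ⟨p, hp.1, rfl⟩
    · intro p hp q hq hpq
      simp only [coe_filter, Set.mem_ofPred_eq] at hp hq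
      rw [← hp.2, ← hq.2, hpq]
  · apply Finset.card_le_card_of_injOn (fun p => (p, rep (f p)))
    · intro p hp
      simp only [coe_filter, Set.mem_ofPred_eq] at hp
      simp only [coe_filter, Set.mem_ofPred_eq, mem_product]
      exact ⟨⟨hp.1, (h1 p hp.1).1⟩, fun h => hp.2 h.symm, (h1 p hp.1).2.symm⟩
    · intro p hp q hq hpq
      exact (Prod.mk.inj hpq).1

/-- Rank of `x` in `A`. -/
noncomputable def rk (A : Finset ℝ) (x : ℝ) : ℕ := (A.filter (fun z => z < x)).card

theorem rk_mono (A : Finset ℝ) {x y : ℝ} (h : x ≤ y) : rk A x ≤ rk A y := by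
  apply Finset.card_le_card
  intro z hz
  simp only [mem_filter] at hz ⊢
  exact ⟨hz.1, lt_of_lt_of_le hz.2 h⟩

theorem rk_strict (A : Finset ℝ) {x y : ℝ} (hx : x ∈ A) (h : x < y) : rk A x < rk A y := by
  apply Finset.card_lt_card
  rw [Finset.ssubset_iff_of_subset]
  · exact ⟨x, by simp [hx, h], by simp⟩
  · intro z hz
    simp only [mem_filter] at hz ⊢
    exact ⟨hz.1, lt_trans hz.2 h⟩

theorem rk_lt (A : Finset ℝ) {x : ℝ} (hx : x ∈ A) : rk A x < A.card := by
  apply Finset.card_lt_card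
  rw [Finset.ssubset_iff_of_subset (filter_subset _ _)]
  exact ⟨x, hx, by simp⟩

theorem rk_inj (A : Finset ℝ) {x y : ℝ} (hx : x ∈ A) (hy : y ∈ A) (h : rk A x = rk A y) :
    x = y := by
  rcases lt_trichotomy x y with h1 | h1 | h1
  · have := rk_strict A hx h1; omega
  · exact h1
  · have := rk_strict A hy h1; omega

theorem cell_lt (A : Finset ℝ) (m : ℕ) {x y : ℝ} (h : rk A x / m < rk A y / m) : x < y := by
  by_contra hn
  push Not at hn
  have := Nat.div_le_div_right (c := m) (rk_mono A hn)
  omega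

theorem cell_card (A : Finset ℝ) (m : ℕ) (hm : 0 < m) (x : ℝ) :
    (A.filter (fun y => rk A x / m = rk A y / m)).card ≤ m := by
  have : (A.filter (fun y => rk A x / m = rk A y / m)).card ≤
      (Finset.Ico (m * (rk A x / m)) (m * (rk A x / m) + m)).card := by
    apply Finset.card_le_card_of_injOn (rk A)
    · intro y hy
      simp only [coe_filter, Set.mem_ofPred_eq] at hy
      simp only [coe_Ico, Set.mem_Ico]
      rw [hy.2]
      have h1 := Nat.div_add_mod (rk A y) m
      have h2 := Nat.mod_lt (rk A y) hm
      omega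
    · intro y hy z hz h
      simp only [coe_filter, Set.mem_ofPred_eq] at hy hz
      exact rk_inj A hy.1 hz.1 h
  simpa using this

theorem key (A : Finset ℝ) (L D : Finset ℝ) (a c : ℝ → ℝ) (m r : ℕ) (hm : 0 < m)
    (hr : ∀ x ∈ A, rk A x / m < r)
    (ha : ∀ l ∈ L, a l ≠ 0) (hc : ∀ l ∈ L, c l ≠ 0)
    (hdet : ∀ l ∈ L, ∀ l' ∈ L, l ≠ l' → a l * c l' ≠ a l' * c l)
    (hD : ∀ l ∈ L, ∀ x ∈ A, ∀ y ∈ A, a l * x + c l * y ∈ D) :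
    L.card * A.card ^ 2 ≤ L.card * (D.card * (2 * r)) + A.card ^ 2 * m ^ 2 := by
  classical
  set g : ℝ → ℕ := fun x => rk A x / m with hg
  have hglt : ∀ {x y : ℝ}, g x < g y → x < y := fun h => cell_lt A m h
  set f : ℝ → ℝ × ℝ → ℝ × ℕ := fun l p =>
    (a l * p.1 + c l * p.2,
      if a l * c l < 0 then g p.1 + g p.2 else g p.1 + (r - g p.2)) with hf
  set X := A ×ˢ A with hX
  set T : ℝ → Finset ((ℝ × ℝ) × (ℝ × ℝ)) := fun l =>
    (X ×ˢ X).filter (fun p => p.1 ≠ p.2 ∧ f l p.1 = f l p.2) with hT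
  -- collisions stay in one cell
  have hcell : ∀ l ∈ L, ∀ p ∈ X, ∀ q ∈ X, f l p = f l q → g p.1 = g q.1 ∧ g p.2 = g q.2 := by
    intro l hl p hp q hq h
    rw [hX, mem_product] at hp hq
    have e1 := (Prod.mk.inj h).1
    have e2 := (Prod.mk.inj h).2
    have r1 : g p.2 < r := hr _ hp.2
    have r2 : g q.2 < r := hr _ hq.2
    have hal := ha l hl
    have hcl := hc l hl
    by_cases hs : a l * c l < 0
    · simp only [hs, if_true] at e2
      rcases lt_trichotomy (g p.1) (g q.1) with h1 | h1 | h1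
      · exfalso
        have h2 : g q.2 < g p.2 := by omega
        have k1 := hglt h1
        have k2 := hglt h2
        have : a l * a l * (q.1 - p.1) = a l * c l * (p.2 - q.2) := by linear_combination (-a l) * e1
        have := mul_pos (mul_self_pos.2 hal) (sub_pos.2 k1)
        have := mul_neg_of_neg_of_pos hs (sub_pos.2 k2)
        linarith
      · exact ⟨h1, by omega⟩
      · exfalso
        have h2 : g p.2 < g q.2 := by omega
        have k1 := hglt h1
        have k2 := hglt h2
        have : a l * a l * (p.1 - q.1) = a l * c l * (q.2 - p.2) := by linear_combination (a l) * e1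
        have := mul_pos (mul_self_pos.2 hal) (sub_pos.2 k1)
        have := mul_neg_of_neg_of_pos hs (sub_pos.2 k2)
        linarith
    · simp only [hs, if_false] at e2
      have hs' : 0 < a l * c l := lt_of_le_of_ne (not_lt.1 hs) (mul_ne_zero hal hcl).symm
      rcases lt_trichotomy (g p.1) (g q.1) with h1 | h1 | h1
      · exfalso
        have h2 : g p.2 < g q.2 := by omega
        have k1 := hglt h1
        have k2 := hglt h2
        have : a l * a l * (q.1 - p.1) = a l * c l * (p.2 - q.2) := by linear_combination (-a l) * e1
        have := mul_pos (mul_self_pos.2 hal) (sub_pos.2 k1)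
        have := mul_pos hs' (sub_pos.2 k2)
        linarith
      · exact ⟨h1, by omega⟩
      · exfalso
        have h2 : g q.2 < g p.2 := by omega
        have k1 := hglt h1
        have k2 := hglt h2
        have : a l * a l * (p.1 - q.1) = a l * c l * (q.2 - p.2) := by linear_combination (a l) * e1
        have := mul_pos (mul_self_pos.2 hal) (sub_pos.2 k1)
        have := mul_pos hs' (sub_pos.2 k2)
        linarith
  have h1 : ∀ l ∈ L, A.card ^ 2 ≤ D.card * (2 * r) + (T l).card := by
    intro l hl
    have h := card_le_image_add_coll X (f l)
    have hXc : X.card = A.card ^ 2 := by rw [hX, card_product, sq]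
    rw [hXc] at h
    refine h.trans (Nat.add_le_add_right ?_ _)
    have : X.image (f l) ⊆ D ×ˢ Finset.range (2 * r) := by
      intro z hz
      rw [mem_image] at hz
      obtain ⟨p, hp, rfl⟩ := hz
      rw [hX, mem_product] at hp
      rw [mem_product]
      refine ⟨hD l hl _ hp.1 _ hp.2, ?_⟩
      have r1 : g p.1 < r := hr _ hp.1
      have r2 : g p.2 < r := hr _ hp.2
      simp only [hf, mem_range]
      split_ifs <;> omega
    simpa using card_le_card this
  have h2 : ∑ l ∈ L, (T l).card ≤ A.card ^ 2 * m ^ 2 := by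
    rw [← Finset.card_biUnion]
    · set U : Finset ((ℝ × ℝ) × (ℝ × ℝ)) := X.biUnion (fun p =>
        ((A.filter (fun y => g p.1 = g y)) ×ˢ (A.filter (fun y => g p.2 = g y))).image
          (fun q => (p, q))) with hU
      have hsub : L.biUnion T ⊆ U := by
        intro z hz
        rw [mem_biUnion] at hz
        obtain ⟨l, hl, hz⟩ := hz
        simp only [hT, mem_filter, mem_product] at hz
        obtain ⟨⟨hz1, hz2⟩, _, hz4⟩ := hz
        have hk := hcell l hl _ hz1 _ hz2 hz4
        rw [hU, mem_biUnion]
        refine ⟨z.1, hz1, ?_⟩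
        rw [mem_image]
        refine ⟨z.2, ?_, rfl⟩
        rw [hX, mem_product] at hz2
        simp only [mem_product, mem_filter]
        exact ⟨⟨hz2.1, hk.1⟩, hz2.2, hk.2⟩
      refine (card_le_card hsub).trans ?_
      have hXc : X.card = A.card ^ 2 := by rw [hX, card_product, sq]
      rw [← hXc]
      apply Finset.card_biUnion_le_card_mul
      intro p hp
      refine card_image_le.trans ?_
      rw [card_product, sq]
      exact Nat.mul_le_mul (cell_card A m hm p.1) (cell_card A m hm p.2)
    · intro l hl l' hl' hne
      rw [Function.onFun, Finset.disjoint_left]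
      intro z hz hz'
      simp only [hT, mem_filter, mem_product] at hz hz'
      have e := (Prod.mk.inj hz.2.2).1
      have e' := (Prod.mk.inj hz'.2.2).1
      have hd := sub_ne_zero.2 (hdet l hl l' hl' hne)
      apply hz.2.1
      apply Prod.ext
      · apply sub_eq_zero.1
        apply (mul_eq_zero.1 (?_ : (a l * c l' - a l' * c l) * (z.1.1 - z.2.1) = 0)).resolve_left hd
        linear_combination c l' * e - c l * e'
      · apply sub_eq_zero.1
        apply (mul_eq_zero.1 (?_ : (a l * c l' - a l' * c l) * (z.1.2 - z.2.2) = 0)).resolve_left hd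
        linear_combination a l * e' - a l' * e
  have h3 := Finset.sum_le_sum h1
  rw [Finset.sum_add_distrib] at h3
  simp only [sum_const, smul_eq_mul] at h3
  omega

theorem bound_of (A : Finset ℝ) (L D : Finset ℝ) (a c : ℝ → ℝ)
    (hL2 : 2 ≤ L.card) (hLn : L.card ≤ A.card ^ 2)
    (ha : ∀ l ∈ L, a l ≠ 0) (hc : ∀ l ∈ L, c l ≠ 0)
    (hdet : ∀ l ∈ L, ∀ l' ∈ L, l ≠ l' → a l * c l' ≠ a l' * c l)
    (hD : ∀ l ∈ L, ∀ x ∈ A, ∀ y ∈ A, a l * x + c l * y ∈ D) :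
    (1 / 24 : ℝ) * (A.card : ℝ) * (L.card : ℝ) ^ ((1 : ℝ) / 2) ≤ (D.card : ℝ) := by
  set K := L.card with hK
  set n := A.card with hn
  set m := Nat.sqrt (K / 2) with hmdef
  have hm1 : m * m ≤ K / 2 := Nat.sqrt_le _
  have hm2 : K / 2 < (m + 1) * (m + 1) := Nat.lt_succ_sqrt _
  have hm : 0 < m := Nat.sqrt_pos.2 (by omega)
  have hmn : m ≤ n := by
    by_contra h
    push Not at h
    have : n * n < m * m := Nat.mul_self_lt_mul_self h
    have : n ^ 2 = n * n := sq n
    omega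
  have hK8 : K ≤ 8 * (m * m) := by
    have : (m + 1) * (m + 1) ≤ (2 * m) * (2 * m) := Nat.mul_le_mul (by omega) (by omega)
    have : (2 * m) * (2 * m) = 4 * (m * m) := by ring
    omega
  have hk := key A L D a c m (n / m + 1) hm
    (fun x hx => Nat.lt_succ_of_le (Nat.div_le_div_right (rk_lt A hx).le)) ha hc hdet hD
  rw [← hK, ← hn] at hk
  -- move to reals
  set r := n / m + 1 with hr
  have hrm : r * m ≤ 2 * n := by
    have := Nat.div_mul_le_self n m
    rw [hr, add_mul]; omega
  have hkR : (K : ℝ) * n ^ 2 ≤ K * (D.card * (2 * r)) + n ^ 2 * m ^ 2 := by exact_mod_cast hk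
  have hrmR : (r : ℝ) * m ≤ 2 * n := by exact_mod_cast hrm
  have hm1R : (m : ℝ) * m * 2 ≤ K := by
    have : m * m * 2 ≤ K := by omega
    exact_mod_cast this
  have hK8R : (K : ℝ) ≤ 8 * (m * m) := by exact_mod_cast hK8
  have hKpos : (0 : ℝ) < K := by
    have : 0 < K := by omega
    exact_mod_cast this
  have hmpos : (0 : ℝ) < m := by exact_mod_cast hm
  have hnpos : (0 : ℝ) < n := by
    have : 0 < n := by omega
    exact_mod_cast this
  have hD0 : (0 : ℝ) ≤ D.card := Nat.cast_nonneg _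
  have s1 : (n : ℝ) ^ 2 ≤ 4 * (D.card * r) := by
    have : (n : ℝ) ^ 2 * (m * m * 2) ≤ n ^ 2 * K := mul_le_mul_of_nonneg_left hm1R (sq_nonneg _)
    have : (K : ℝ) * n ^ 2 ≤ K * (4 * (D.card * r)) := by linarith
    exact le_of_mul_le_mul_left this hKpos
  have s2 : (n : ℝ) * m ≤ 8 * D.card := by
    have h1 : (n : ℝ) ^ 2 * m ≤ 4 * (D.card * r) * m := mul_le_mul_of_nonneg_right s1 hmpos.le
    have h2 : (D.card : ℝ) * (r * m) ≤ D.card * (2 * n) := mul_le_mul_of_nonneg_left hrmR hD0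
    have : (n : ℝ) * (n * m) ≤ n * (8 * D.card) := by linarith
    exact le_of_mul_le_mul_left this hnpos
  rw [← Real.sqrt_eq_rpow]
  have s3 : Real.sqrt K ≤ 3 * m := by
    rw [Real.sqrt_le_left (by positivity)]
    nlinarith
  have : (n : ℝ) * Real.sqrt K ≤ n * (3 * m) := mul_le_mul_of_nonneg_left s3 hnpos.le
  linarith

theorem stmt_14 :
    ∃ c : ℝ, 0 < c ∧
      ∀ A : Finset ℝ, (0 : ℝ) ∉ A → 2 ≤ A.card →
        c * (A.card : ℝ) * ((A / A).card : ℝ) ^ ((1 : ℝ) / 2)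
            ≤ ((A * A + A * A).card : ℝ) ∧
        c * (A.card : ℝ) * ((A / A).card : ℝ) ^ ((1 : ℝ) / 2)
            ≤ ((A * A - A * A).card : ℝ) := by
  refine ⟨1 / 24, by norm_num, ?_⟩
  intro A h0 h2
  have hex : ∀ l : ℝ, ∃ p : ℝ × ℝ, l ∈ A / A → p.1 ∈ A ∧ p.2 ∈ A ∧ p.1 / p.2 = l := by
    intro l
    by_cases hl : l ∈ A / A
    · obtain ⟨x, hx, y, hy, hxy⟩ := Finset.mem_div.1 hl
      exact ⟨(x, y), fun _ => ⟨hx, hy, hxy⟩⟩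
    · exact ⟨(0, 0), fun h => absurd h hl⟩
  choose p hp using hex
  have hne : ∀ x ∈ A, x ≠ 0 := fun x hx h => h0 (h ▸ hx)
  have hL2 : 2 ≤ (A / A).card := by
    obtain ⟨x, hx, y, hy, hxy⟩ := Finset.one_lt_card.1 h2
    refine Finset.one_lt_card.2 ⟨x / x, Finset.div_mem_div hx hx, x / y,
      Finset.div_mem_div hx hy, ?_⟩
    intro h
    rw [div_self (hne x hx), eq_comm, div_eq_one_iff_eq (hne y hy)] at h
    exact hxy h
  have hLn : (A / A).card ≤ A.card ^ 2 := by
    rw [sq]; exact Finset.card_div_le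
  have hdet : ∀ l ∈ A / A, ∀ l' ∈ A / A, l ≠ l' → (p l).1 * (p l').2 ≠ (p l').1 * (p l).2 := by
    intro l hl l' hl' hll h
    apply hll
    rw [← (hp l hl).2.2, ← (hp l' hl').2.2,
      div_eq_div_iff (hne _ (hp l hl).2.1) (hne _ (hp l' hl').2.1)]
    exact h
  constructor
  · apply bound_of A (A / A) _ (fun l => (p l).1) (fun l => (p l).2) hL2 hLn
      (fun l hl => hne _ (hp l hl).1) (fun l hl => hne _ (hp l hl).2.1) hdet
    intro l hl x hx y hy
    exact Finset.add_mem_add (Finset.mul_mem_mul (hp l hl).1 hx)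
      (Finset.mul_mem_mul (hp l hl).2.1 hy)
  · apply bound_of A (A / A) _ (fun l => (p l).1) (fun l => -(p l).2) hL2 hLn
      (fun l hl => hne _ (hp l hl).1) (fun l hl => neg_ne_zero.2 (hne _ (hp l hl).2.1))
    · intro l hl l' hl' hll h
      exact hdet l hl l' hl' hll (by simpa using h)
    intro l hl x hx y hy
    have := Finset.sub_mem_sub (Finset.mul_mem_mul (hp l hl).1 hx)
      (Finset.mul_mem_mul (hp l hl).2.1 hy)
    simpa [sub_eq_add_neg] using this
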